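/- The number of elements of order exactly q − 1 in Ree(q) equals φ(q − 1) · q^3 (q^3 + 1) / 2, where φ is Euler's totient function. -/

import Mathlib

open Matrix

set_option linter.unusedSectionVars false

noncomputable section

namespace ReePaper

variable {F : Type*} [Field F] [Fintype F]

/-- The matrix `α(x)`. -/
def amat (t : ℕ) (x : F) : Matrix (Fin 7) (Fin 7) F :=
  !![1, x^t, 0, 0, -x^(3*t+1), -x^(3*t+2), x^(4*t+2);
     0, 1, x, x^(t+1), -x^(2*t+1), 0, -x^(3*t+2);
     0, 0, 1, x^t, -x^(2*t), 0, x^(3*t+1);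
     0, 0, 0, 1, x^t, 0, 0;
     0, 0, 0, 0, 1, -x, x^(t+1);
     0, 0, 0, 0, 0, 1, -x^t;
     0, 0, 0, 0, 0, 0, 1]

/-- The matrix `β(x)`. -/
def bmat (t : ℕ) (x : F) : Matrix (Fin 7) (Fin 7) F :=
  !![1, 0, -x^t, 0, -x, 0, -x^(t+1);
     0, 1, 0, x^t, 0, -x^(2*t), 0;
     0, 0, 1, 0, 0, 0, x;
     0, 0, 0, 1, 0, x^t, 0;
     0, 0, 0, 0, 1, 0, x^t;
     0, 0, 0, 0, 0, 1, 0;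
     0, 0, 0, 0, 0, 0, 1]

/-- The matrix `γ(x)`. -/
def cmat (t : ℕ) (x : F) : Matrix (Fin 7) (Fin 7) F :=
  !![1, 0, 0, -x^t, 0, -x, -x^(2*t);
     0, 1, 0, 0, -x^t, 0, x;
     0, 0, 1, 0, 0, x^t, 0;
     0, 0, 0, 1, 0, 0, -x^t;
     0, 0, 0, 0, 1, 0, 0;
     0, 0, 0, 0, 0, 1, 0;
     0, 0, 0, 0, 0, 0, 1]

/-- The diagonal matrix `h(λ)`. -/
def hmat (t : ℕ) (l : Fˣ) : Matrix (Fin 7) (Fin 7) F :=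
  Matrix.diagonal ![((l ^ (t : ℤ) : Fˣ) : F), ((l ^ (1 - (t : ℤ)) : Fˣ) : F),
    ((l ^ (2 * (t : ℤ) - 1) : Fˣ) : F), 1, ((l ^ (1 - 2 * (t : ℤ)) : Fˣ) : F),
    ((l ^ ((t : ℤ) - 1) : Fˣ) : F), ((l ^ (-(t : ℤ)) : Fˣ) : F)]

/-- The matrix `Υ`, the antidiagonal matrix with all entries `-1`. -/
def ups : Matrix (Fin 7) (Fin 7) F :=
  !![0, 0, 0, 0, 0, 0, -1;
     0, 0, 0, 0, 0, -1, 0;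
     0, 0, 0, 0, -1, 0, 0;
     0, 0, 0, -1, 0, 0, 0;
     0, 0, -1, 0, 0, 0, 0;
     0, -1, 0, 0, 0, 0, 0;
     -1, 0, 0, 0, 0, 0, 0]

/-- `S(a, b, c) = α(a) β(b) γ(c)`. -/
def Smat (t : ℕ) (a b c : F) : Matrix (Fin 7) (Fin 7) F :=
  amat t a * bmat t b * cmat t c

/-- The Ree group `Ree(q) = ⟨α(x), β(x), γ(x), h(λ), Υ⟩ ≤ GL(7, q)`. -/
def ReeGroup (t : ℕ) : Subgroup (GL (Fin 7) F) :=
  Subgroup.closure {g : GL (Fin 7) F |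
    (∃ x : F, (g : Matrix (Fin 7) (Fin 7) F) = amat t x) ∨
    (∃ x : F, (g : Matrix (Fin 7) (Fin 7) F) = bmat t x) ∨
    (∃ x : F, (g : Matrix (Fin 7) (Fin 7) F) = cmat t x) ∨
    (∃ l : Fˣ, (g : Matrix (Fin 7) (Fin 7) F) = hmat t l) ∨
    (g : Matrix (Fin 7) (Fin 7) F) = ups}

/-- The subgroup `U(q) = ⟨α(x), β(x), γ(x)⟩`. -/
def Usub (t : ℕ) : Subgroup (GL (Fin 7) F) :=
  Subgroup.closure {g : GL (Fin 7) F |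
    (∃ x : F, (g : Matrix (Fin 7) (Fin 7) F) = amat t x) ∨
    (∃ x : F, (g : Matrix (Fin 7) (Fin 7) F) = bmat t x) ∨
    (∃ x : F, (g : Matrix (Fin 7) (Fin 7) F) = cmat t x)}

/-- The subgroup `H(q) = {h(λ) : λ ∈ F_q^×}`. -/
def Hsub (t : ℕ) : Subgroup (GL (Fin 7) F) :=
  Subgroup.closure {g : GL (Fin 7) F |
    ∃ l : Fˣ, (g : Matrix (Fin 7) (Fin 7) F) = hmat t l}

end ReePaper

open ReePaper

namespace ReePaper

section Alg
variable {F : Type*} [Field F]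

/-- The alternating product on the 7-dimensional module (columns). -/
def cr (v w : Fin 7 → F) : Fin 7 → F :=
  ![(v 0 * w 3 - v 3 * w 0) + (v 1 * w 2 - v 2 * w 1),
    (v 0 * w 4 - v 4 * w 0) - (v 1 * w 3 - v 3 * w 1),
    -(v 0 * w 5 - v 5 * w 0) - (v 2 * w 3 - v 3 * w 2),
    (v 0 * w 6 - v 6 * w 0) - (v 1 * w 5 - v 5 * w 1) - (v 2 * w 4 - v 4 * w 2),
    -(v 1 * w 6 - v 6 * w 1) - (v 3 * w 4 - v 4 * w 3),
    (v 2 * w 6 - v 6 * w 2) - (v 3 * w 5 - v 5 * w 3),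
    (v 3 * w 6 - v 6 * w 3) + (v 4 * w 5 - v 5 * w 4)]

/-- The twisted Plücker coordinates of a line. -/
def pl (v w : Fin 7 → F) : Fin 7 → F :=
  ![v 0 * w 1 - v 1 * w 0,
    v 0 * w 2 - v 2 * w 0,
    -(v 1 * w 4 - v 4 * w 1),
    (v 1 * w 5 - v 5 * w 1) - (v 2 * w 4 - v 4 * w 2),
    -(v 2 * w 5 - v 5 * w 2),
    v 4 * w 6 - v 6 * w 4,
    v 5 * w 6 - v 6 * w 5]

/-- Matrices preserving the product and the twisted Plücker map. -/
structure Good (τ : F →+* F) (M : Matrix (Fin 7) (Fin 7) F) : Prop where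
  cross : ∀ v w, cr (M *ᵥ v) (M *ᵥ w) = M *ᵥ cr v w
  tw : ∀ v w, cr v w = 0 → pl (M *ᵥ v) (M *ᵥ w) = (M.map τ) *ᵥ pl v w

lemma Good.mul {τ : F →+* F} {M N : Matrix (Fin 7) (Fin 7) F} (hM : Good τ M) (hN : Good τ N) :
    Good τ (M * N) := by
  constructor
  · intro v w
    simp only [← Matrix.mulVec_mulVec, hM.cross, hN.cross]
  · intro v w h
    have h1 : cr (N *ᵥ v) (N *ᵥ w) = 0 := by rw [hN.cross, h, Matrix.mulVec_zero]
    rw [← Matrix.mulVec_mulVec, ← Matrix.mulVec_mulVec, hM.tw _ _ h1, hN.tw _ _ h,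
      Matrix.mulVec_mulVec, Matrix.map_mul]

lemma Good.one {τ : F →+* F} : Good τ (1 : Matrix (Fin 7) (Fin 7) F) := by
  constructor
  · intro v w
    simp
  · intro v w h
    rw [Matrix.map_one _ (map_zero _) (map_one _)]
    simp

lemma vec_eta (u : Fin 7 → F) : u = ![u 0, u 1, u 2, u 3, u 4, u 5, u 6] := by
  ext i; fin_cases i <;> rfl

def amat' (y Y : F) : Matrix (Fin 7) (Fin 7) F :=
  !![1, y, 0, 0, -(y^3*Y), -(y^3*Y^2), y^4*Y^2;
     0, 1, Y, y*Y, -(y^2*Y), 0, -(y^3*Y^2);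
     0, 0, 1, y, -y^2, 0, y^3*Y;
     0, 0, 0, 1, y, 0, 0;
     0, 0, 0, 0, 1, -Y, y*Y;
     0, 0, 0, 0, 0, 1, -y;
     0, 0, 0, 0, 0, 0, 1]

def bmat' (y Y : F) : Matrix (Fin 7) (Fin 7) F :=
  !![1, 0, -y, 0, -Y, 0, -(y*Y);
     0, 1, 0, y, 0, -y^2, 0;
     0, 0, 1, 0, 0, 0, Y;
     0, 0, 0, 1, 0, y, 0;
     0, 0, 0, 0, 1, 0, y;
     0, 0, 0, 0, 0, 1, 0;
     0, 0, 0, 0, 0, 0, 1]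

def cmat' (y Y : F) : Matrix (Fin 7) (Fin 7) F :=
  !![1, 0, 0, -y, 0, -Y, -y^2;
     0, 1, 0, 0, -y, 0, Y;
     0, 0, 1, 0, 0, y, 0;
     0, 0, 0, 1, 0, 0, -y;
     0, 0, 0, 0, 1, 0, 0;
     0, 0, 0, 0, 0, 1, 0;
     0, 0, 0, 0, 0, 0, 1]

/-- the diagonal torus element, in terms of `d` and `T = τ d` -/
def hmat' (d T : F) : Matrix (Fin 7) (Fin 7) F :=
  Matrix.diagonal ![d, T * d⁻¹, d ^ 2 * T⁻¹, 1, T * (d⁻¹) ^ 2, d * T⁻¹, d⁻¹]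

set_option maxHeartbeats 4000000 in
lemma good_a [CharP F 3] (τ : F →+* F) (y : F) (hy : τ (τ y) = y ^ 3) :
    Good τ (amat' y (τ y)) := by
  constructor
  · intro v w
    generalize τ y = Y
    rw [vec_eta v, vec_eta w]
    generalize v 0 = v0, v 1 = v1, v 2 = v2, v 3 = v3, v 4 = v4, v 5 = v5, v 6 = v6
    generalize w 0 = w0, w 1 = w1, w 2 = w2, w 3 = w3, w 4 = w4, w 5 = w5, w 6 = w6
    ext i
    fin_cases i <;> simp [cr, amat', Matrix.mulVec, dotProduct, Fin.sum_univ_succ] 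
    all_goals grind
  · intro v w h
    have h0 := congrFun h 0
    have h1 := congrFun h 1
    have h2 := congrFun h 2
    have h3 := congrFun h 3
    have h4 := congrFun h 4
    have h5 := congrFun h 5
    have h6 := congrFun h 6
    rw [vec_eta v, vec_eta w]
    simp [cr] at h0 h1 h2 h3 h4 h5 h6
    clear h
    generalize v 0 = v0, v 1 = v1, v 2 = v2, v 3 = v3, v 4 = v4, v 5 = v5, v 6 = v6 at *
    generalize w 0 = w0, w 1 = w1, w 2 = w2, w 3 = w3, w 4 = w4, w 5 = w5, w 6 = w6 at *
    ext i
    fin_cases i <;> simp [pl, amat', Matrix.mulVec, dotProduct, Fin.sum_univ_succ, hy] <;>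
      generalize τ y = Y at *
    · linear_combination (norm := skip) (y * Y) * h0 + (-y^2*Y) * h1 - y^3*Y^2 * h3
        - y^4*Y^2*h4 - y^4*Y^3*h5 - y^5*Y^3*h6
      clear h0 h1 h2 h3 h4 h5 h6
      grind
    · linear_combination (norm := skip) y * h0 + (-y^2) * h1 + y^3*Y * h3
        - y^4*Y*h4 - y^4*Y^2*h5 - y^5*Y^2*h6
      clear h0 h1 h2 h3 h4 h5 h6
      grind
    · linear_combination (norm := skip) y*Y*h4 - y*Y^2*h5 - y^2*Y^2*h6
      clear h0 h1 h2 h3 h4 h5 h6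
      grind
    · linear_combination (norm := skip) y*h4 + y*Y*h5 + y^2*Y*h6
      clear h0 h1 h2 h3 h4 h5 h6
      grind
    · linear_combination (norm := skip) y*h5 + y^2*h6
      clear h0 h1 h2 h3 h4 h5 h6
      grind
    · clear h0 h1 h2 h3 h4 h5 h6
      grind
    · clear h0 h1 h2 h3 h4 h5 h6
      grind

set_option maxHeartbeats 4000000 in
lemma good_b [CharP F 3] (τ : F →+* F) (y : F) (hy : τ (τ y) = y ^ 3) :
    Good τ (bmat' y (τ y)) := by
  constructor
  · intro v w
    generalize τ y = Y
    rw [vec_eta v, vec_eta w]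
    generalize v 0 = v0, v 1 = v1, v 2 = v2, v 3 = v3, v 4 = v4, v 5 = v5, v 6 = v6
    generalize w 0 = w0, w 1 = w1, w 2 = w2, w 3 = w3, w 4 = w4, w 5 = w5, w 6 = w6
    ext i
    fin_cases i <;> simp [cr, bmat', Matrix.mulVec, dotProduct, Fin.sum_univ_succ] 
    all_goals grind
  · intro v w h
    have h0 := congrFun h 0
    have h1 := congrFun h 1
    have h2 := congrFun h 2
    have h3 := congrFun h 3
    have h4 := congrFun h 4
    have h5 := congrFun h 5
    have h6 := congrFun h 6
    rw [vec_eta v, vec_eta w]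
    simp [cr] at h0 h1 h2 h3 h4 h5 h6
    clear h
    generalize v 0 = v0, v 1 = v1, v 2 = v2, v 3 = v3, v 4 = v4, v 5 = v5, v 6 = v6 at *
    generalize w 0 = w0, w 1 = w1, w 2 = w2, w 3 = w3, w 4 = w4, w 5 = w5, w 6 = w6 at *
    ext i
    fin_cases i <;> simp [pl, bmat', Matrix.mulVec, dotProduct, Fin.sum_univ_succ, hy] <;>
      generalize τ y = Y at *
    · linear_combination (norm := skip) y * h0 + y^2 * h2 - y*Y*h4 + y^2*Y*h6
      clear h0 h1 h2 h3 h4 h5 h6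
      grind
    · linear_combination (norm := skip) Y * h3
      clear h0 h1 h2 h3 h4 h5 h6
      grind
    · linear_combination (norm := skip) y*h4 - y^2*h6
      clear h0 h1 h2 h3 h4 h5 h6
      grind
    · linear_combination (norm := skip) -y*h5
      clear h0 h1 h2 h3 h4 h5 h6
      grind
    all_goals
      clear h0 h1 h2 h3 h4 h5 h6
      grind

set_option maxHeartbeats 4000000 in
lemma good_c [CharP F 3] (τ : F →+* F) (y : F) (hy : τ (τ y) = y ^ 3) :
    Good τ (cmat' y (τ y)) := by
  constructor
  · intro v w
    generalize τ y = Y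
    rw [vec_eta v, vec_eta w]
    generalize v 0 = v0, v 1 = v1, v 2 = v2, v 3 = v3, v 4 = v4, v 5 = v5, v 6 = v6
    generalize w 0 = w0, w 1 = w1, w 2 = w2, w 3 = w3, w 4 = w4, w 5 = w5, w 6 = w6
    ext i
    fin_cases i <;> simp [cr, cmat', Matrix.mulVec, dotProduct, Fin.sum_univ_succ] 
    all_goals grind
  · intro v w h
    have h0 := congrFun h 0
    have h1 := congrFun h 1
    have h2 := congrFun h 2
    have h3 := congrFun h 3
    have h4 := congrFun h 4
    have h5 := congrFun h 5
    have h6 := congrFun h 6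
    rw [vec_eta v, vec_eta w]
    simp [cr] at h0 h1 h2 h3 h4 h5 h6
    clear h
    generalize v 0 = v0, v 1 = v1, v 2 = v2, v 3 = v3, v 4 = v4, v 5 = v5, v 6 = v6 at *
    generalize w 0 = w0, w 1 = w1, w 2 = w2, w 3 = w3, w 4 = w4, w 5 = w5, w 6 = w6 at *
    ext i
    fin_cases i <;> simp [pl, cmat', Matrix.mulVec, dotProduct, Fin.sum_univ_succ, hy] <;>
      generalize τ y = Y at *
    · linear_combination (norm := skip) -y * h1 + Y * h3 - y^2*h4 - y*Y*h6
      clear h0 h1 h2 h3 h4 h5 h6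
      grind
    · linear_combination (norm := skip) -y * h2 + y^2 * h5
      clear h0 h1 h2 h3 h4 h5 h6
      grind
    all_goals
      clear h0 h1 h2 h3 h4 h5 h6
      grind

lemma good_u (τ : F →+* F) : Good τ (ups : Matrix (Fin 7) (Fin 7) F) := by
  constructor
  · intro v w
    ext i
    fin_cases i <;> simp [cr, ups, Matrix.mulVec, dotProduct, Fin.sum_univ_succ] 
    all_goals ring
  · intro v w h
    ext i
    fin_cases i <;> simp [pl, ups, Matrix.mulVec, dotProduct, Fin.sum_univ_succ]
    try ring

lemma good_h (τ : F →+* F) (d : F) (hd : d ≠ 0) (hy : τ (τ d) = d ^ 3) :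
    Good τ (hmat' d (τ d)) := by
  have hT : τ d ≠ 0 := (map_ne_zero τ).2 hd
  constructor
  · intro v w
    generalize τ d = T at *
    ext i
    fin_cases i <;> simp [cr, hmat', Matrix.mulVec_diagonal]
    all_goals field_simp
    all_goals ring
  · intro v w h
    ext i
    have e : ∀ j, ((hmat' d (τ d)).map τ *ᵥ pl v w) j = τ (hmat' d (τ d) j j) * pl v w j := by
      intro j
      simp only [hmat', Matrix.diagonal_map (map_zero τ), Matrix.mulVec_diagonal,
        Matrix.diagonal_apply_eq]
    rw [e]
    fin_cases i <;> simp [pl, hmat', Matrix.mulVec_diagonal, hy] <;> generalize τ d = T at *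
    all_goals field_simp
    all_goals ring

end Alg
end ReePaper

namespace ReePaper
section Pts
variable {F : Type*} [Field F]

/-- Vectors spanning a point of the ovoid. -/
def Pt (τ : F →+* F) (v : Fin 7 → F) : Prop :=
  v ≠ 0 ∧ ∃ w, cr v w = 0 ∧ pl v w = fun i => τ (v i)

lemma cr_smul (c d : F) (v w : Fin 7 → F) : cr (c • v) (d • w) = (c * d) • cr v w := by
  ext i
  fin_cases i <;> simp [cr] <;> ring

lemma pl_smul (c d : F) (v w : Fin 7 → F) : pl (c • v) (d • w) = (c * d) • pl v w := by
  ext i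
  fin_cases i <;> simp [pl] <;> ring

lemma Pt.smul {τ : F →+* F} {v : Fin 7 → F} (h : Pt τ v) {c : F} (hc : c ≠ 0) :
    Pt τ (c • v) := by
  obtain ⟨h0, w, h1, h2⟩ := h
  refine ⟨smul_ne_zero hc h0, (τ c * c⁻¹) • w, ?_, ?_⟩
  · rw [cr_smul, h1, smul_zero]
  · rw [pl_smul, h2]
    ext i
    simp only [Pi.smul_apply, smul_eq_mul, map_mul]
    field_simp

lemma Pt.map {τ : F →+* F} {v : Fin 7 → F} (h : Pt τ v) {M : Matrix (Fin 7) (Fin 7) F}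
    (hM : Good τ M) (hv : M *ᵥ v ≠ 0) : Pt τ (M *ᵥ v) := by
  obtain ⟨h0, w, h1, h2⟩ := h
  refine ⟨hv, M *ᵥ w, ?_, ?_⟩
  · rw [hM.cross, h1, Matrix.mulVec_zero]
  · rw [hM.tw _ _ h1, h2]
    ext i
    exact (RingHom.map_mulVec τ M v i).symm

lemma pt_first (τ : F →+* F) : Pt τ (Pi.single 0 1 : Fin 7 → F) := by
  refine ⟨by simp, Pi.single 1 1, ?_, ?_⟩
  · ext i; fin_cases i <;> simp [cr]
  · ext i; fin_cases i <;> simp [pl]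

lemma pt_last (τ : F →+* F) : Pt τ (Pi.single 6 1 : Fin 7 → F) := by
  refine ⟨by simp, -Pi.single 5 1, ?_, ?_⟩
  · ext i; fin_cases i <;> simp [cr]
  · ext i; fin_cases i <;> simp [pl]

lemma Pt.of_last_zero {τ : F →+* F} {v : Fin 7 → F} (h : Pt τ v) (h6 : v 6 = 0) :
    v = v 0 • Pi.single 0 1 := by
  obtain ⟨-, w, hc, hp⟩ := h
  have c0 := congrFun hc 0
  have c1 := congrFun hc 1
  have c2 := congrFun hc 2
  have c3 := congrFun hc 3
  have c4 := congrFun hc 4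
  have c5 := congrFun hc 5
  have c6 := congrFun hc 6
  have p0 := congrFun hp 0
  have p1 := congrFun hp 1
  have p2 := congrFun hp 2
  have p3 := congrFun hp 3
  have p4 := congrFun hp 4
  have p5 := congrFun hp 5
  have p6 := congrFun hp 6
  simp [cr, h6] at c0 c1 c2 c3 c4 c5 c6
  simp [pl, h6] at p0 p1 p2 p3 p4 p5 p6
  have tz : ∀ x : F, 0 = τ x → x = 0 := fun x hx => (map_eq_zero τ).1 hx.symm
  have key : v 1 = 0 ∧ v 2 = 0 ∧ v 3 = 0 ∧ v 4 = 0 ∧ v 5 = 0 := by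
    by_cases w6 : w 6 = 0
    · have v5 : v 5 = 0 := tz _ (by grind)
      by_cases w5 : w 5 = 0
      · have v4 : v 4 = 0 := tz _ (by grind)
        have v3 : v 3 = 0 := tz _ (by grind)
        have v2 : v 2 = 0 := by
          by_contra hv2
          have w4 : w 4 = 0 := by grind
          exact hv2 (tz _ (by grind))
        have v1 : v 1 = 0 := by
          by_contra hv1
          have w4 : w 4 = 0 := by grind
          have w3 : w 3 = 0 := by grind
          have w2 : w 2 = 0 := by grind
          exact hv1 (tz _ (by grind))
        exact ⟨v1, v2, v3, v4, v5⟩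
      · have v4 : v 4 = 0 := by grind
        have v3 : v 3 = 0 := by grind
        have v2 : v 2 = 0 := by
          rw [v4, map_zero] at p4
          grind
        have v1 : v 1 = 0 := by
          rw [v3, map_zero] at p3
          grind
        exact ⟨v1, v2, v3, v4, v5⟩
    · have v5 : v 5 = 0 := by grind
      have v4 : v 4 = 0 := by
        rw [v5, map_zero] at p5
        grind
      have v3 : v 3 = 0 := by grind
      have v2 : v 2 = 0 := by grind
      have v1 : v 1 = 0 := by grind
      exact ⟨v1, v2, v3, v4, v5⟩
  obtain ⟨v1, v2, v3, v4, v5⟩ := key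
  ext i
  fin_cases i <;> simp [v1, v2, v3, v4, v5, h6]

lemma Pt.of_norm {τ : F →+* F} {v : Fin 7 → F} (h : Pt τ v) (h6 : v 6 = 1)
    (h3 : v 3 = 0) (h4 : v 4 = 0) (h5 : v 5 = 0) : v = Pi.single 6 1 := by
  obtain ⟨-, w, hc, hp⟩ := h
  have c0 := congrFun hc 0
  have c1 := congrFun hc 1
  have c2 := congrFun hc 2
  have c3 := congrFun hc 3
  have c4 := congrFun hc 4
  have c5 := congrFun hc 5
  have c6 := congrFun hc 6
  have p3 := congrFun hp 3
  have p4 := congrFun hp 4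
  have p5 := congrFun hp 5
  have p6 := congrFun hp 6
  simp [cr, h3, h4, h5, h6] at c0 c1 c2 c3 c4 c5 c6
  simp [pl, h3, h4, h5, h6] at p3 p4 p5 p6
  have w5 : w 5 = -1 := by grind
  have w4 : w 4 = 0 := by grind
  have w3 : w 3 = 0 := by grind
  have v2 : v 2 = 0 := by grind
  have v1 : v 1 = 0 := by grind
  have v0 : v 0 = 0 := by grind
  ext i
  fin_cases i <;> simp [v0, v1, v2, h3, h4, h5, h6]

lemma stab_two {τ : F →+* F} (hτ : ∀ x, τ (τ x) = x ^ 3) {M : Matrix (Fin 7) (Fin 7) F}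
    (hM : Good τ M) {l k : F}
    (hl : l ≠ 0) (hk : k ≠ 0) (h1 : M *ᵥ Pi.single 0 1 = l • Pi.single 0 1)
    (h7 : M *ᵥ Pi.single 6 1 = k • Pi.single 6 1) : M = hmat' l (τ l) := by
  have A : ∀ i j, cr (fun r => M r i) (fun r => M r j)
      = M *ᵥ cr (Pi.single i 1) (Pi.single j 1) := by
    intro i j
    rw [← hM.cross]
    simp only [Matrix.mulVec_single_one]
    rfl
  have B : ∀ i j, cr (Pi.single i 1 : Fin 7 → F) (Pi.single j 1) = 0 →
      pl (fun r => M r i) (fun r => M r j)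
      = M.map τ *ᵥ pl (Pi.single i 1) (Pi.single j 1) := by
    intro i j h
    rw [← hM.tw _ _ h]
    simp only [Matrix.mulVec_single_one]
    rfl
  have C : ∀ r, M r 0 = l * (Pi.single 0 1 : Fin 7 → F) r := by
    intro r
    have := congrFun h1 r
    simpa only [Matrix.mulVec_single_one, Matrix.col_apply, Pi.smul_apply, smul_eq_mul] using this
  have D : ∀ r, M r 6 = k * (Pi.single 6 1 : Fin 7 → F) r := by
    intro r
    have := congrFun h7 r
    simpa only [Matrix.mulVec_single_one, Matrix.col_apply, Pi.smul_apply, smul_eq_mul] using this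
  have x01 : cr (Pi.single 0 1 : Fin 7 → F) (Pi.single 1 1) = 0 := by
    ext i; fin_cases i <;> simp [cr]
  have x02 : cr (Pi.single 0 1 : Fin 7 → F) (Pi.single 2 1) = 0 := by
    ext i; fin_cases i <;> simp [cr]
  have x64 : cr (Pi.single 6 1 : Fin 7 → F) (Pi.single 4 1) = 0 := by
    ext i; fin_cases i <;> simp [cr]
  have x65 : cr (Pi.single 6 1 : Fin 7 → F) (Pi.single 5 1) = 0 := by
    ext i; fin_cases i <;> simp [cr]
  have x16 : cr (Pi.single 1 1 : Fin 7 → F) (Pi.single 6 1) = - Pi.single 4 1 := by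
    ext i; fin_cases i <;> simp [cr]
  have x26 : cr (Pi.single 2 1 : Fin 7 → F) (Pi.single 6 1) = Pi.single 5 1 := by
    ext i; fin_cases i <;> simp [cr]
  have x06 : cr (Pi.single 0 1 : Fin 7 → F) (Pi.single 6 1) = Pi.single 3 1 := by
    ext i; fin_cases i <;> simp [cr]
  have x03 : cr (Pi.single 0 1 : Fin 7 → F) (Pi.single 3 1) = Pi.single 0 1 := by
    ext i; fin_cases i <;> simp [cr]
  have y01 : pl (Pi.single 0 1 : Fin 7 → F) (Pi.single 1 1) = Pi.single 0 1 := by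
    ext i; fin_cases i <;> simp [pl]
  have y02 : pl (Pi.single 0 1 : Fin 7 → F) (Pi.single 2 1) = Pi.single 1 1 := by
    ext i; fin_cases i <;> simp [pl]
  have y65 : pl (Pi.single 6 1 : Fin 7 → F) (Pi.single 5 1) = - Pi.single 6 1 := by
    ext i; fin_cases i <;> simp [pl]
  have a01 := A 0 1
  have a02 := A 0 2
  have a64 := A 6 4
  have a65 := A 6 5
  have a16 := A 1 6
  have a26 := A 2 6
  have a06 := A 0 6
  have a03 := A 0 3
  have b01 := B 0 1 x01
  have b02 := B 0 2 x02
  have b65 := B 6 5 x65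
  rw [x01, Matrix.mulVec_zero] at a01
  rw [x02, Matrix.mulVec_zero] at a02
  rw [x64, Matrix.mulVec_zero] at a64
  rw [x65, Matrix.mulVec_zero] at a65
  rw [x16, Matrix.mulVec_neg] at a16
  rw [x26] at a26
  rw [x06] at a06
  rw [x03] at a03
  rw [y01] at b01
  rw [y02] at b02
  rw [y65, Matrix.mulVec_neg] at b65
  have C0 := C 0
  have C1 := C 1
  have C2 := C 2
  have C3 := C 3
  have C4 := C 4
  have C5 := C 5
  have C6 := C 6
  have D0 := D 0
  have D1 := D 1
  have D2 := D 2
  have D3 := D 3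
  have D4 := D 4
  have D5 := D 5
  have D6 := D 6
  clear A B C D h1 h7
  simp at C0 C1 C2 C3 C4 C5 C6 D0 D1 D2 D3 D4 D5 D6
  simp only [Matrix.mulVec_single_one, funext_iff, Fin.forall_fin_succ, Matrix.col_apply,
    Pi.neg_apply, Matrix.map_apply] at a01 a02 a64 a65 a16 a26 a06 a03 b01 b02 b65
  simp [cr, C0, C1, C2, C3, C4, C5, C6, D0, D1, D2, D3, D4, D5, D6, hl, hk]
    at a01 a02 a64 a65 a16 a26 a06 a03
  simp [pl, C0, C1, C2, C3, C4, C5, C6, D0, D1, D2, D3, D4, D5, D6, hl, hk] at b01 b02 b65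
  clear x01 x02 x64 x65 x16 x26 x06 x03 y01 y02 y65
  have hT : τ l ≠ 0 := (map_ne_zero τ).2 hl
  obtain ⟨a1, a2, a3, a4⟩ := a01
  obtain ⟨a5, a6, a7, a8⟩ := a02
  obtain ⟨a9, a10, a11, a12⟩ := a64
  obtain ⟨a13, a14, a15, a16'⟩ := a65
  obtain ⟨-, -, -, e1, e2, e3, e4⟩ := a16
  obtain ⟨-, -, -, f1, f2, f3, f4⟩ := a26
  obtain ⟨g1, g2, g3, g4, -, -, -⟩ := a06
  obtain ⟨g5, g6, g7, g8⟩ := a03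
  obtain ⟨i1, i2⟩ := b01
  obtain ⟨i3, i4, -⟩ := b02
  obtain ⟨i5, i6⟩ := b65
  have k1 : k = l⁻¹ := by
    rw [g5] at g4
    exact eq_inv_of_mul_eq_one_right g4
  have M01 : M 0 1 = 0 := by
    rw [a12, neg_zero] at e1
    exact (mul_eq_zero.1 e1).resolve_right hk
  have M02 : M 0 2 = 0 := by
    rw [a16'] at f1
    exact (mul_eq_zero.1 f1).resolve_right hk
  have M12 : M 1 2 = 0 := by
    rw [M01, map_zero] at i3
    exact (mul_eq_zero.1 i3).resolve_left hl
  have M11 : M 1 1 = τ l * l⁻¹ := by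
    rw [← i1]; field_simp
  have M22 : M 2 2 = l ^ 2 * (τ l)⁻¹ := by
    rw [M11, map_mul, hτ, map_inv₀] at i4
    apply mul_left_cancel₀ hl
    rw [i4]; ring
  have M44 : M 4 4 = τ l * l⁻¹ ^ 2 := by
    rw [← e2, M11, k1]; ring
  have M55 : M 5 5 = l * (τ l)⁻¹ := by
    rw [← f3, M22, k1]; field_simp
  have M54 : M 5 4 = 0 := by
    rw [i2, zero_mul] at e3
    exact neg_eq_zero.1 e3.symm
  have M64 : M 6 4 = 0 := by
    rw [a1, zero_mul] at e4
    exact neg_eq_zero.1 e4.symm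
  have M65 : M 6 5 = 0 := by
    rw [a5, zero_mul] at f4
    exact f4.symm
  ext i j
  fin_cases i <;> fin_cases j <;> simp [hmat', Matrix.diagonal_apply, *] <;> simp [← g1, ← g2, ← g3]
end Pts
end ReePaper

namespace ReePaper
section Abs

variable {G X A : Type*} [Group G] [Finite G] [MulAction G X] [Finite X]
  [CommGroup A] [Finite A]

lemma fixed_two_of_order (h : A →* G) (hinj : Function.Injective h) (p o : X) (hpo : p ≠ o)
    (two : ∀ x y : X, x ≠ y → ∃ g : G, g • x = p ∧ g • y = o)
    (stab : ∀ g : G, g • p = p → g • o = o → ∃ a, h a = g)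
    (fixp : ∀ a, h a • p = p) (fixo : ∀ a, h a • o = o)
    (fix2 : ∀ a (x : X), a ^ 2 ≠ 1 → h a • x = x → x = p ∨ x = o)
    (w : G) (wp : w • p = o) (wo : w • o = p) (hw : ∀ a, w * h a * w⁻¹ = h a⁻¹)
    (N l : ℕ) (hN : 0 < N) (hl : l.Prime) (hl2 : 2 < l) (hlN : l ∣ N)
    (hX : Nat.card X ≡ 2 [MOD l]) (g : G) (hg : orderOf g = N) :
    ∃ x y : X, x ≠ y ∧ ∀ z, g • z = z ↔ z = x ∨ z = y := by
  classical
  obtain ⟨c, rfl⟩ := hlN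
  have hc : c ≠ 0 := by rintro rfl; simp at hN
  set u := g ^ c with hu
  have hou : orderOf u = l := by
    rw [hu, orderOf_pow_of_dvd hc (hg ▸ Dvd.intro_left l rfl), hg]
    exact Nat.mul_div_cancel _ (Nat.pos_of_ne_zero hc)
  have : Fact l.Prime := ⟨hl⟩
  have hP : IsPGroup l (Subgroup.zpowers u) :=
    IsPGroup.of_card (n := 1) (by rw [Nat.card_zpowers, hou, pow_one])
  have hm := hX.symm.trans (hP.card_modEq_card_fixedPoints X)
  have h2 : 2 ≤ Nat.card (MulAction.fixedPoints (Subgroup.zpowers u) X) := by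
    by_contra hlt
    push Not at hlt
    have := Nat.ModEq.eq_of_lt_of_lt hm hl2 (by omega)
    omega
  have : Nontrivial (MulAction.fixedPoints (Subgroup.zpowers u) X) :=
    Finite.one_lt_card_iff_nontrivial.1 h2
  obtain ⟨⟨x, hx⟩, ⟨y, hy⟩, hxy⟩ := exists_pair_ne (MulAction.fixedPoints (Subgroup.zpowers u) X)
  have hxy' : x ≠ y := fun e => hxy (Subtype.ext e)
  have hx' : u • x = x := hx ⟨u, Subgroup.mem_zpowers u⟩
  have hy' : u • y = y := hy ⟨u, Subgroup.mem_zpowers u⟩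
  obtain ⟨k, kx, ky⟩ := two x y hxy'
  have kx' : k⁻¹ • p = x := by rw [← kx, inv_smul_smul]
  have ky' : k⁻¹ • o = y := by rw [← ky, inv_smul_smul]
  obtain ⟨a, ha⟩ := stab (k * u * k⁻¹) (by rw [mul_smul, mul_smul, kx', hx', kx])
    (by rw [mul_smul, mul_smul, ky', hy', ky])
  have hoa : orderOf a = l := by
    rw [← orderOf_injective h hinj a, ha, ← hou]
    exact (MulAut.conj k).orderOf_eq u
  have ha2 : a ^ 2 ≠ 1 := by
    intro e
    have := Nat.le_of_dvd (by norm_num) (orderOf_dvd_of_pow_eq_one e)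
    omega
  -- the element conjugated
  set g' := k * g * k⁻¹ with hg'
  have hcomm : g' * h a = h a * g' := by
    rw [ha, hg', hu]
    have : g * g ^ c = g ^ c * g := (Commute.self_pow g c).eq
    calc k * g * k⁻¹ * (k * g ^ c * k⁻¹) = k * (g * g ^ c) * k⁻¹ := by group
      _ = k * (g ^ c * g) * k⁻¹ := by rw [this]
      _ = _ := by group
  have hfix : ∀ z : X, h a • z = z → h a • (g' • z) = g' • z := by
    intro z hz
    rw [← mul_smul, ← hcomm, mul_smul, hz]
  have hgp := fix2 a _ ha2 (hfix p (fixp a))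
  have hgo := fix2 a _ ha2 (hfix o (fixo a))
  have hgp' : g' • p = p := by
    rcases hgp with hgp | hgp
    · exact hgp
    · exfalso
      have hgo' : g' • o = p := by
        rcases hgo with hgo | hgo
        · exact hgo
        · exact absurd (MulAction.injective g' (hgp.trans hgo.symm)) hpo
      obtain ⟨b, hb⟩ := stab (w * g') (by rw [mul_smul, hgp, wo]) (by rw [mul_smul, hgo', wp])
      have e1 : (w * g') * h a * (w * g')⁻¹ = h a := by
        rw [← hb, ← map_mul, mul_comm b a, map_mul]; group
      have e2 : (w * g') * h a * (w * g')⁻¹ = h a⁻¹ := by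
        rw [← hw]
        calc (w * g') * h a * (w * g')⁻¹ = w * (g' * h a) * g'⁻¹ * w⁻¹ := by group
          _ = w * (h a * g') * g'⁻¹ * w⁻¹ := by rw [hcomm]
          _ = _ := by group
      have e3 : a = a⁻¹ := hinj (e1.symm.trans e2)
      apply ha2
      rw [pow_two]
      nth_rewrite 1 [e3]
      simp
  have hgo' : g' • o = o := by
    rcases hgo with hgo | hgo
    · exact absurd (MulAction.injective g' (hgo.trans hgp'.symm)) hpo.symm
    · exact hgo
  refine ⟨x, y, hxy', fun z => ⟨fun hz => ?_, ?_⟩⟩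
  · have huz : u • z = z := by
      have : g ∈ MulAction.stabilizer G z := hz
      exact (MulAction.stabilizer G z).pow_mem this c
    have := fix2 a (k • z) ha2 (by rw [ha, mul_smul, mul_smul, inv_smul_smul, huz])
    rcases this with e | e
    · left; rw [← kx', ← e, inv_smul_smul]
    · right; rw [← ky', ← e, inv_smul_smul]
  · have hgk : g = k⁻¹ * g' * k := by rw [hg']; group
    rintro (rfl | rfl)
    · rw [hgk, mul_smul, mul_smul, kx, hgp', kx']
    · rw [hgk, mul_smul, mul_smul, ky, hgo', ky']

lemma abstract_count [IsCyclic A] (h : A →* G) (hinj : Function.Injective h) (p o : X)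
    (hpo : p ≠ o)
    (two : ∀ x y : X, x ≠ y → ∃ g : G, g • x = p ∧ g • y = o)
    (stab : ∀ g : G, g • p = p → g • o = o → ∃ a, h a = g)
    (fixp : ∀ a, h a • p = p) (fixo : ∀ a, h a • o = o)
    (fix2 : ∀ a (x : X), a ^ 2 ≠ 1 → h a • x = x → x = p ∨ x = o)
    (w : G) (wp : w • p = o) (wo : w • o = p) (hw : ∀ a, w * h a * w⁻¹ = h a⁻¹)
    (l : ℕ) (hl : l.Prime) (hl2 : 2 < l) (hlN : l ∣ Nat.card A)
    (hX : Nat.card X ≡ 2 [MOD l]) :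
    2 * Nat.card {g : G // orderOf g = Nat.card A} =
      Nat.totient (Nat.card A) * (Nat.card X * (Nat.card X - 1)) := by
  classical
  have := Fintype.ofFinite G
  have := Fintype.ofFinite X
  have := Fintype.ofFinite A
  set N := Nat.card A with hN
  have key := Finset.sum_card_bipartiteAbove_eq_sum_card_bipartiteBelow
    (s := Finset.univ.filter (fun g : G => orderOf g = N))
    (t := (Finset.univ : Finset X).offDiag)
    (fun g xy => g • xy.1 = xy.1 ∧ g • xy.2 = xy.2)
  have e1 : ∀ g ∈ Finset.univ.filter (fun g : G => orderOf g = N),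
      (Finset.bipartiteAbove (fun (g : G) (xy : X × X) => g • xy.1 = xy.1 ∧ g • xy.2 = xy.2)
        (Finset.univ : Finset X).offDiag g).card = 2 := by
    intro g hg
    obtain ⟨x, y, hxy, hz⟩ := fixed_two_of_order h hinj p o hpo two stab fixp fixo fix2 w wp wo hw
      N l Nat.card_pos hl hl2 hlN hX g (by simpa using hg)
    have : Finset.bipartiteAbove (fun (g : G) (xy : X × X) => g • xy.1 = xy.1 ∧ g • xy.2 = xy.2)
        (Finset.univ : Finset X).offDiag g = {(x, y), (y, x)} := by
      ext ⟨a, b⟩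
      simp only [Finset.mem_bipartiteAbove, Finset.mem_offDiag, Finset.mem_univ, true_and, hz,
        Finset.mem_insert, Finset.mem_singleton, Prod.mk.injEq]
      grind
    rw [this, Finset.card_pair]
    simp [hxy]
  have e2 : ∀ xy ∈ (Finset.univ : Finset X).offDiag,
      (Finset.bipartiteBelow (fun (g : G) (xy : X × X) => g • xy.1 = xy.1 ∧ g • xy.2 = xy.2)
        (Finset.univ.filter (fun g : G => orderOf g = N)) xy).card = Nat.totient N := by
    rintro ⟨x, y⟩ hxy
    have hxy' : x ≠ y := by simpa using hxy
    obtain ⟨k, kx, ky⟩ := two x y hxy'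
    have kx' : k⁻¹ • p = x := by rw [← kx, inv_smul_smul]
    have ky' : k⁻¹ • o = y := by rw [← ky, inv_smul_smul]
    have hcard : (Finset.univ.filter (fun a : A => orderOf a = N)).card = Nat.totient N := by
      apply IsCyclic.card_orderOf_eq_totient
      rw [hN, Nat.card_eq_fintype_card]
    rw [← hcard]
    symm
    apply Finset.card_bij (fun a _ => k⁻¹ * h a * k)
    · intro a ha
      simp only [Finset.mem_filter, Finset.mem_univ, true_and] at ha
      simp only [Finset.mem_bipartiteBelow, Finset.mem_filter, Finset.mem_univ, true_and]
      refine ⟨?_, ?_, ?_⟩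
      · rw [← ha, ← orderOf_injective h hinj a]
        have := (MulAut.conj k⁻¹).orderOf_eq (h a)
        simpa using this
      · rw [mul_smul, mul_smul, kx, fixp, kx']
      · rw [mul_smul, mul_smul, ky, fixo, ky']
    · intro a _ b _ hab
      apply hinj
      simpa using hab
    · intro g hg
      simp only [Finset.mem_bipartiteBelow, Finset.mem_filter, Finset.mem_univ, true_and] at hg
      obtain ⟨h1, h2, h3⟩ := hg
      obtain ⟨a, ha⟩ := stab (k * g * k⁻¹) (by rw [mul_smul, mul_smul, kx', h2, kx])
        (by rw [mul_smul, mul_smul, ky', h3, ky])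
      refine ⟨a, ?_, ?_⟩
      · simp only [Finset.mem_filter, Finset.mem_univ, true_and]
        rw [← orderOf_injective h hinj a, ha, ← h1]
        exact (MulAut.conj k).orderOf_eq g
      · rw [ha]; group
  rw [Finset.sum_congr rfl e1, Finset.sum_congr rfl e2, Finset.sum_const, Finset.sum_const,
    Finset.offDiag_card] at key
  simp only [smul_eq_mul, Finset.card_univ] at key
  rw [Nat.card_eq_fintype_card, Nat.card_eq_fintype_card, Fintype.card_subtype, mul_comm, key,
    mul_comm, Nat.mul_sub (Fintype.card X), mul_one]

end Abs
end ReePaper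

namespace ReePaper
section Conc
open scoped LinearAlgebra.Projectivization
variable {F : Type*} [Field F]

/-- The natural action on column vectors. -/
instance subAct (K : Subgroup (GL (Fin 7) F)) : DistribMulAction K (Fin 7 → F) where
  smul g v := ((g : GL (Fin 7) F) : Matrix (Fin 7) (Fin 7) F) *ᵥ v
  one_smul v := Matrix.one_mulVec v
  mul_smul g h v := (Matrix.mulVec_mulVec v _ _).symm
  smul_zero g := Matrix.mulVec_zero _
  smul_add g v w := Matrix.mulVec_add _ v w

lemma subAct_def (K : Subgroup (GL (Fin 7) F)) (g : K) (v : Fin 7 → F) :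
    g • v = ((g : GL (Fin 7) F) : Matrix (Fin 7) (Fin 7) F) *ᵥ v := rfl

instance subAct_comm (K : Subgroup (GL (Fin 7) F)) : SMulCommClass K F (Fin 7 → F) where
  smul_comm g c v := by
    rw [subAct_def, subAct_def, Matrix.mulVec_smul]

/-- The hypotheses on the group that we use. -/
structure Data (τ : F →+* F) (K : Subgroup (GL (Fin 7) F)) : Prop where
  tt : ∀ x, τ (τ x) = x ^ 3
  good : ∀ g : K, Good τ ((g : GL (Fin 7) F) : Matrix (Fin 7) (Fin 7) F)
  hA : ∀ y, ∃ g : K, ((g : GL (Fin 7) F) : Matrix (Fin 7) (Fin 7) F) = amat' y (τ y)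
  hB : ∀ y, ∃ g : K, ((g : GL (Fin 7) F) : Matrix (Fin 7) (Fin 7) F) = bmat' y (τ y)
  hC : ∀ y, ∃ g : K, ((g : GL (Fin 7) F) : Matrix (Fin 7) (Fin 7) F) = cmat' y (τ y)
  hH : ∀ d : Fˣ, ∃ g : K, ((g : GL (Fin 7) F) : Matrix (Fin 7) (Fin 7) F) = hmat' (d : F) (τ (d : F))
  hU : ∃ g : K, ((g : GL (Fin 7) F) : Matrix (Fin 7) (Fin 7) F) = ups

variable {τ : F →+* F} {K : Subgroup (GL (Fin 7) F)}

lemma Data.ptSmul (D : Data τ K) (g : K) {v : Fin 7 → F} (h : Pt τ v) : Pt τ (g • v) :=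
  h.map (D.good g) ((smul_ne_zero_iff_ne g).2 h.1)

/-- The ovoid. -/
def ovoid (D : Data τ K) : SubMulAction K (ℙ F (Fin 7 → F)) where
  carrier := {x | ∃ (v : Fin 7 → F) (h : Pt τ v), x = Projectivization.mk F v h.1}
  smul_mem' := by
    rintro g x ⟨v, h, rfl⟩
    exact ⟨g • v, D.ptSmul g h, Projectivization.smul_mk g h.1⟩

/-- The point of the ovoid spanned by a vector. -/
def pt (D : Data τ K) (v : Fin 7 → F) (h : Pt τ v) : ovoid D :=
  ⟨Projectivization.mk F v h.1, v, h, rfl⟩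

lemma pt_surj (D : Data τ K) (x : ovoid D) : ∃ v h, x = pt D v h := by
  obtain ⟨x, v, h, rfl⟩ := x
  exact ⟨v, h, rfl⟩

lemma smul_pt (D : Data τ K) (g : K) (v : Fin 7 → F) (h : Pt τ v) :
    g • pt D v h = pt D (g • v) (D.ptSmul g h) := rfl

lemma pt_eq (D : Data τ K) (v w : Fin 7 → F) (h : Pt τ v) (h' : Pt τ w) :
    pt D v h = pt D w h' ↔ ∃ a : F, a • w = v := by
  exact Subtype.ext_iff.trans (Projectivization.mk_eq_mk_iff' F v w h.1 h'.1)

lemma pt_eq_of (D : Data τ K) {v w : Fin 7 → F} (h : Pt τ v) (h' : Pt τ w) (a : F)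
    (e : v = a • w) : pt D v h = pt D w h' := (pt_eq D v w h h').2 ⟨a, e.symm⟩

lemma smul_pt_eq (D : Data τ K) (g : K) (v w : Fin 7 → F) (h : Pt τ v) (h' : Pt τ w) :
    g • pt D v h = pt D w h' ↔ ∃ a : F, a • w = g • v :=
  pt_eq D (g • v) w (D.ptSmul g h) h'

lemma smul_pt_eq_of (D : Data τ K) (g : K) {v w : Fin 7 → F} (h : Pt τ v) (h' : Pt τ w) (a : F)
    (e : g • v = a • w) : g • pt D v h = pt D w h' :=
  (smul_pt_eq D g v w h h').2 ⟨a, e.symm⟩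

/-- first base point -/
def p1 (D : Data τ K) : ovoid D := pt D (Pi.single 0 1) (pt_first τ)
/-- second base point -/
def p7 (D : Data τ K) : ovoid D := pt D (Pi.single 6 1) (pt_last τ)

lemma p1_ne_p7 (D : Data τ K) : p1 D ≠ p7 D := by
  intro h
  obtain ⟨a, ha⟩ := (pt_eq D _ _ _ _).1 h
  have := congrFun ha 0
  simp at this

lemma pt_cases (D : Data τ K) (x : ovoid D) :
    x = p1 D ∨ ∃ v h, v 6 = 1 ∧ x = pt D v h := by
  obtain ⟨v, h, rfl⟩ := pt_surj D x
  by_cases h6 : v 6 = 0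
  · left
    exact pt_eq_of D _ _ _ (h.of_last_zero h6)
  · right
    refine ⟨(v 6)⁻¹ • v, h.smul (inv_ne_zero h6), ?_, ?_⟩
    · simp [h6]
    · apply pt_eq_of D _ _ (v 6)
      rw [smul_smul, mul_inv_cancel₀ h6, one_smul]

lemma exU (D : Data τ K) (a b c : F) : ∃ u : K, u • (Pi.single 0 1 : Fin 7 → F) = Pi.single 0 1 ∧
    ∀ v : Fin 7 → F, v 3 = a → v 4 = b → v 5 = c → v 6 = 1 →
      (u • v) 3 = 0 ∧ (u • v) 4 = 0 ∧ (u • v) 5 = 0 ∧ (u • v) 6 = 1 := by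
  obtain ⟨g1, h1⟩ := D.hA c
  obtain ⟨g2, h2⟩ := D.hB (-(b - τ c * c + c * τ c))
  obtain ⟨g3, h3⟩ := D.hC (a + c * b)
  refine ⟨g3 * g2 * g1, ?_, ?_⟩
  · rw [mul_smul, mul_smul, subAct_def, subAct_def, subAct_def, h1, h2, h3]
    have e1 : ∀ y Y : F, amat' y Y *ᵥ Pi.single 0 1 = Pi.single 0 1 := by
      intro y Y
      rw [Matrix.mulVec_single_one]
      ext i; fin_cases i <;> simp [amat']
    have e2 : ∀ y Y : F, bmat' y Y *ᵥ Pi.single 0 1 = Pi.single 0 1 := by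
      intro y Y
      rw [Matrix.mulVec_single_one]
      ext i; fin_cases i <;> simp [bmat']
    have e3 : ∀ y Y : F, cmat' y Y *ᵥ Pi.single 0 1 = Pi.single 0 1 := by
      intro y Y
      rw [Matrix.mulVec_single_one]
      ext i; fin_cases i <;> simp [cmat']
    rw [e1, e2, e3]
  · intro v r3 r4 r5 r6
    have e1 : ∀ (y Y : F) (w : Fin 7 → F), (amat' y Y *ᵥ w) 3 = w 3 + y * w 4 ∧
        (amat' y Y *ᵥ w) 4 = w 4 - Y * w 5 + y * Y * w 6 ∧
        (amat' y Y *ᵥ w) 5 = w 5 - y * w 6 ∧ (amat' y Y *ᵥ w) 6 = w 6 := by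
      intro y Y w
      refine ⟨?_, ?_, ?_, ?_⟩ <;>
        simp [amat', Matrix.mulVec, dotProduct, Fin.sum_univ_succ] <;> try ring
    have e2 : ∀ (y Y : F) (w : Fin 7 → F), (bmat' y Y *ᵥ w) 3 = w 3 + y * w 5 ∧
        (bmat' y Y *ᵥ w) 4 = w 4 + y * w 6 ∧
        (bmat' y Y *ᵥ w) 5 = w 5 ∧ (bmat' y Y *ᵥ w) 6 = w 6 := by
      intro y Y w
      refine ⟨?_, ?_, ?_, ?_⟩ <;>
        simp [bmat', Matrix.mulVec, dotProduct, Fin.sum_univ_succ]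
    have e3 : ∀ (y Y : F) (w : Fin 7 → F), (cmat' y Y *ᵥ w) 3 = w 3 - y * w 6 ∧
        (cmat' y Y *ᵥ w) 4 = w 4 ∧
        (cmat' y Y *ᵥ w) 5 = w 5 ∧ (cmat' y Y *ᵥ w) 6 = w 6 := by
      intro y Y w
      refine ⟨?_, ?_, ?_, ?_⟩ <;>
        simp [cmat', Matrix.mulVec, dotProduct, Fin.sum_univ_succ] <;> try ring
    rw [mul_smul, mul_smul, subAct_def, subAct_def, subAct_def, h1, h2, h3]
    simp only [(e3 _ _ _).1, (e3 _ _ _).2.1, (e3 _ _ _).2.2.1, (e3 _ _ _).2.2.2,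
      (e2 _ _ _).1, (e2 _ _ _).2.1, (e2 _ _ _).2.2.1, (e2 _ _ _).2.2.2,
      (e1 _ _ _).1, (e1 _ _ _).2.1, (e1 _ _ _).2.2.1, (e1 _ _ _).2.2.2, r3, r4, r5, r6]
    refine ⟨?_, ?_, ?_, trivial⟩ <;> ring

lemma exU' (D : Data τ K) (a b c : F) : ∃ u : K, u • (Pi.single 0 1 : Fin 7 → F) = Pi.single 0 1 ∧
    ∀ v : Fin 7 → F, Pt τ v → v 3 = a → v 4 = b → v 5 = c → v 6 = 1 →
      u • v = Pi.single 6 1 := by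
  obtain ⟨u, h1, h2⟩ := exU D a b c
  refine ⟨u, h1, fun v hv r3 r4 r5 r6 => ?_⟩
  obtain ⟨s3, s4, s5, s6⟩ := h2 v r3 r4 r5 r6
  exact (D.ptSmul u hv).of_norm s6 s3 s4 s5

lemma exV (D : Data τ K) (a b c : F) :
    ∃ v : Fin 7 → F, Pt τ v ∧ v 3 = a ∧ v 4 = b ∧ v 5 = c ∧ v 6 = 1 := by
  obtain ⟨g1, h1⟩ := D.hA (-c)
  obtain ⟨g2, h2⟩ := D.hB (b - c * τ c)
  obtain ⟨g3, h3⟩ := D.hC (-c * (b - c * τ c) - a)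
  refine ⟨g1 • g2 • g3 • Pi.single 6 1,
    D.ptSmul _ (D.ptSmul _ (D.ptSmul _ (pt_last τ))), ?_⟩
  rw [subAct_def, subAct_def, subAct_def, h1, h2, h3, Matrix.mulVec_single_one]
  have e3 : ∀ (y Y : F), (cmat' y Y).col 6 = ![-y^2, Y, 0, -y, 0, 0, 1] := by
    intro y Y
    ext i; fin_cases i <;> simp [cmat']
  rw [e3]
  refine ⟨?_, ?_, ?_, ?_⟩ <;>
    simp [amat', bmat', Matrix.mulVec, dotProduct, Fin.sum_univ_succ] <;> try ring

lemma ovoid_card [Fintype F] (D : Data τ K) : Nat.card (ovoid D) = Fintype.card F ^ 3 + 1 := by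
  classical
  choose V hV h3 h4 h5 h6 using exV D
  let f : Option (F × F × F) → ovoid D := fun o => o.elim (p1 D)
    (fun z => pt D (V z.1 z.2.1 z.2.2) (hV _ _ _))
  have hf : Function.Bijective f := by
    constructor
    · rintro (_ | ⟨a, b, c⟩) (_ | ⟨a', b', c'⟩) h
      · rfl
      · exfalso
        obtain ⟨r, hr⟩ := (pt_eq D _ _ (hV a' b' c') (pt_first τ)).1 h.symm
        have := congrFun hr 6
        simp [h6] at this
      · exfalso
        obtain ⟨r, hr⟩ := (pt_eq D _ _ (hV a b c) (pt_first τ)).1 h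
        have := congrFun hr 6
        simp [h6] at this
      · obtain ⟨r, hr⟩ := (pt_eq D _ _ (hV a b c) (hV a' b' c')).1 h
        have r6 := congrFun hr 6
        have r3 := congrFun hr 3
        have r4 := congrFun hr 4
        have r5 := congrFun hr 5
        simp only [Pi.smul_apply, smul_eq_mul, h6, h5, h4, h3, mul_one] at r6 r3 r4 r5
        rw [r6, one_mul] at r3 r4 r5
        rw [r3, r4, r5]
    · intro x
      rcases pt_cases D x with rfl | ⟨v, h, hv6, rfl⟩
      · exact ⟨none, rfl⟩
      · refine ⟨some (v 3, v 4, v 5), ?_⟩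
        obtain ⟨u, -, hu⟩ := exU' D (v 3) (v 4) (v 5)
        have e1 := hu v h rfl rfl rfl hv6
        have e2 := hu (V (v 3) (v 4) (v 5)) (hV _ _ _) (h3 _ _ _) (h4 _ _ _) (h5 _ _ _) (h6 _ _ _)
        exact pt_eq_of D (hV (v 3) (v 4) (v 5)) h 1 (by
          rw [one_smul]
          exact MulAction.injective u (e2.trans e1.symm))
  rw [← Nat.card_congr (Equiv.ofBijective f hf)]
  simp only [Nat.card_eq_fintype_card, Fintype.card_option, Fintype.card_prod]
  ring

lemma ups_smul (D : Data τ K) {w : K}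
    (hw : ((w : GL (Fin 7) F) : Matrix (Fin 7) (Fin 7) F) = ups) :
    w • p1 D = p7 D ∧ w • p7 D = p1 D := by
  constructor
  · refine smul_pt_eq_of D _ (pt_first τ) (pt_last τ) (-1) ?_
    rw [subAct_def, hw, Matrix.mulVec_single_one]
    ext i; fin_cases i <;> simp [ups]
  · refine smul_pt_eq_of D _ (pt_last τ) (pt_first τ) (-1) ?_
    rw [subAct_def, hw, Matrix.mulVec_single_one]
    ext i; fin_cases i <;> simp [ups]

lemma two_trans (D : Data τ K) (x y : ovoid D) (hxy : x ≠ y) :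
    ∃ g : K, g • x = p1 D ∧ g • y = p7 D := by
  obtain ⟨w, hw⟩ := D.hU
  obtain ⟨w1, w7⟩ := ups_smul D hw
  have toLast : ∀ z : ovoid D, z ≠ p1 D → ∃ u : K, u • p1 D = p1 D ∧ u • z = p7 D := by
    intro z hz
    rcases pt_cases D z with rfl | ⟨v, h, hv6, rfl⟩
    · exact absurd rfl hz
    · obtain ⟨u, hu1, hu⟩ := exU' D (v 3) (v 4) (v 5)
      have e1 := hu v h rfl rfl rfl hv6
      exact ⟨u, smul_pt_eq_of D _ (pt_first τ) (pt_first τ) 1 (by rw [hu1, one_smul]), smul_pt_eq_of D _ h (pt_last τ) 1 (by rw [e1, one_smul])⟩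
  have : ∃ g : K, g • x = p1 D := by
    by_cases hx : x = p1 D
    · exact ⟨1, by rw [one_smul, hx]⟩
    · obtain ⟨u, -, hu⟩ := toLast x hx
      exact ⟨w * u, by rw [mul_smul, hu, w7]⟩
  obtain ⟨g, hg⟩ := this
  obtain ⟨u, hu, hu'⟩ := toLast (g • y) (fun e => hxy (MulAction.injective g (hg.trans e.symm)))
  exact ⟨u * g, by rw [mul_smul, hg, hu], by rw [mul_smul, hu']⟩

lemma hmat'_mul (d T e S : F) : hmat' d T * hmat' e S = hmat' (d * e) (T * S) := by
  rw [hmat', hmat', hmat', Matrix.diagonal_mul_diagonal]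
  congr 1
  ext i
  fin_cases i <;> simp [mul_inv] <;> ring

lemma subExt {g h : K} (e : ((g : GL (Fin 7) F) : Matrix (Fin 7) (Fin 7) F) =
    ((h : GL (Fin 7) F) : Matrix (Fin 7) (Fin 7) F)) : g = h :=
  Subtype.ext (Units.ext e)

theorem data_count [Fintype F] (D : Data τ K) (l : ℕ) (hl : l.Prime) (hl2 : 2 < l)
    (hlN : l ∣ Fintype.card F - 1) :
    2 * Nat.card {g : K // orderOf g = Fintype.card F - 1} =
      Nat.totient (Fintype.card F - 1) * (Fintype.card F ^ 3 * (Fintype.card F ^ 3 + 1)) := by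
  classical
  choose hh hhm using D.hH
  let h : Fˣ →* K := MonoidHom.mk' hh (by
    intro a b
    apply subExt
    rw [Subgroup.coe_mul, Units.val_mul, hhm, hhm, hhm, hmat'_mul, Units.val_mul, map_mul])
  have hm : ∀ d : Fˣ, ((h d : GL (Fin 7) F) : Matrix (Fin 7) (Fin 7) F) = hmat' (d : F) (τ (d : F)) := hhm
  have hact : ∀ (d : Fˣ) (v : Fin 7 → F) i, (h d • v) i =
      (![(d : F), τ d * (d : F)⁻¹, (d : F) ^ 2 * (τ d)⁻¹, 1, τ d * ((d : F)⁻¹) ^ 2, d * (τ d)⁻¹,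
        (d : F)⁻¹] : Fin 7 → F) i * v i := by
    intro d v i
    rw [subAct_def, hm, hmat', Matrix.mulVec_diagonal]
  obtain ⟨w, hw⟩ := D.hU
  obtain ⟨w1, w7⟩ := ups_smul D hw
  have hcardA : Nat.card Fˣ = Fintype.card F - 1 := by
    rw [Nat.card_eq_fintype_card, Fintype.card_units]
  have hcX := ovoid_card D
  have hq : 0 < Fintype.card F := Fintype.card_pos
  have main := abstract_count (G := K) (X := ovoid D) (A := Fˣ) h ?_ (p1 D) (p7 D) (p1_ne_p7 D)
    (two_trans D) ?_ ?_ ?_ ?_ w w1 w7 ?_ l hl hl2 (hcardA ▸ hlN) ?_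
  · rw [hcardA, hcX] at main
    rw [main, Nat.add_sub_cancel]
    ring
  · intro a b e
    have := congrArg (fun g : K => ((g : GL (Fin 7) F) : Matrix (Fin 7) (Fin 7) F) 0 0) e
    simp only [hm, hmat', Matrix.diagonal_apply_eq] at this
    exact Units.ext this
  · intro g g1 g7
    obtain ⟨r, hr⟩ := (smul_pt_eq D g _ _ (pt_first τ) (pt_first τ)).1 g1
    obtain ⟨s, hs⟩ := (smul_pt_eq D g _ _ (pt_last τ) (pt_last τ)).1 g7
    have hr0 : r ≠ 0 := by
      rintro rfl
      rw [zero_smul] at hr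
      exact (D.ptSmul g (pt_first τ)).1 hr.symm
    have hs0 : s ≠ 0 := by
      rintro rfl
      rw [zero_smul] at hs
      exact (D.ptSmul g (pt_last τ)).1 hs.symm
    refine ⟨Units.mk0 r hr0, ?_⟩
    apply subExt
    rw [hm]
    exact (stab_two D.tt (D.good g) hr0 hs0 hr.symm hs.symm).symm
  · intro d
    refine smul_pt_eq_of D _ (pt_first τ) (pt_first τ) (d : F) ?_
    ext i
    rw [hact]
    fin_cases i <;> simp
  · intro d
    refine smul_pt_eq_of D _ (pt_last τ) (pt_last τ) ((d : F)⁻¹) ?_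
    ext i
    rw [hact]
    fin_cases i <;> simp
  · intro d x hd hx
    rcases pt_cases D x with rfl | ⟨v, hv, hv6, rfl⟩
    · left; rfl
    · right
      obtain ⟨r, hr⟩ := (smul_pt_eq D _ _ _ hv hv).1 hx
      have d0 : (d : F) ≠ 0 := d.ne_zero
      have T0 : τ d ≠ 0 := (map_ne_zero τ).2 d0
      have hd2 : (d : F) ^ 2 ≠ 1 := fun e => hd (Units.ext (by simpa using e))
      have r6 := congrFun hr 6
      have r5 := congrFun hr 5
      have r4 := congrFun hr 4
      have r3 := congrFun hr 3
      rw [hact] at r6 r5 r4 r3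
      simp only [Pi.smul_apply, smul_eq_mul] at r6 r5 r4 r3
      simp [hv6] at r6 r5 r4 r3
      have hr' : r = (d : F)⁻¹ := r6
      have v3 : v 3 = 0 := by
        by_contra hne
        have e := mul_right_cancel₀ hne (r3.trans (one_mul _).symm)
        rw [hr', inv_eq_one] at e
        exact hd2 (by rw [e, one_pow])
      have v4 : v 4 = 0 := by
        rcases r4 with e | e
        · exfalso
          have e' : τ d = d := by
            rw [hr'] at e
            field_simp at e
            exact e.symm
          have := D.tt d
          rw [e', e'] at this
          apply hd2
          apply mul_left_cancel₀ d0
          rw [mul_one, ← pow_succ']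
          exact this.symm
        · exact e
      have v5 : v 5 = 0 := by
        rcases r5 with e | e
        · exfalso
          have e' : τ d = (d : F) ^ 2 := by
            rw [hr'] at e
            field_simp at e
            exact e
          have := D.tt d
          rw [e', map_pow, e'] at this
          have e2 : (d : F) = 1 := by
            apply mul_left_cancel₀ (pow_ne_zero 3 d0)
            linear_combination this
          exact hd2 (by rw [e2, one_pow])
        · exact e
      exact pt_eq_of D hv (pt_last τ) 1 (by rw [one_smul]; exact hv.of_norm hv6 v3 v4 v5)
  · intro d
    rw [mul_inv_eq_iff_eq_mul]
    apply subExt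
    rw [Subgroup.coe_mul, Units.val_mul, Subgroup.coe_mul, Units.val_mul, hm, hm, hw]
    have d0 : (d : F) ≠ 0 := d.ne_zero
    have T0 : τ d ≠ 0 := (map_ne_zero τ).2 d0
    rw [hmat', hmat']
    ext i j
    rw [Matrix.mul_diagonal, Matrix.diagonal_mul]
    fin_cases i <;> fin_cases j <;> simp [ups]
    all_goals field_simp
  · rw [hcX]
    have h1 : Fintype.card F ≡ 1 [MOD l] := ((Nat.modEq_iff_dvd' hq).2 hlN).symm
    have := (h1.pow 3).add_right 1
    simpa using this

end Conc
end ReePaper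

namespace ReePaper
section Fin
variable {F : Type*} [Field F]

lemma amat_eq (t : ℕ) (x : F) : amat t x = amat' (x ^ t) x := by
  ext i j
  fin_cases i <;> fin_cases j <;> simp [amat, amat'] <;> ring

lemma bmat_eq (t : ℕ) (x : F) : bmat t x = bmat' (x ^ t) x := by
  ext i j
  fin_cases i <;> fin_cases j <;> simp [bmat, bmat'] <;> ring

lemma cmat_eq (t : ℕ) (x : F) : cmat t x = cmat' (x ^ t) x := by
  ext i j
  fin_cases i <;> fin_cases j <;> simp [cmat, cmat'] <;> ring

lemma hmat_eq (t : ℕ) (l : Fˣ) : hmat t l = hmat' ((l : F) ^ t) (l : F) := by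
  have h0 : (l : F) ≠ 0 := l.ne_zero
  have e : ∀ n : ℤ, ((l ^ n : Fˣ) : F) = (l : F) ^ n := fun n => Units.val_zpow_eq_zpow_val l n
  rw [hmat, hmat']
  congr 1
  ext i
  fin_cases i <;>
    simp [e, zpow_sub₀ h0, _root_.zpow_neg, _root_.zpow_mul, zpow_natCast,
      mul_comm (2 : ℤ)] <;> field_simp <;>
    (norm_cast; try rw [pow_mul])

lemma unip_det {M : Matrix (Fin 7) (Fin 7) F} (hM : ∀ i j, j < i → M i j = 0)
    (h1 : ∀ i, M i i = 1) : M.det ≠ 0 := by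
  rw [Matrix.det_of_isUpperTriangular (fun i j h => hM i j h)]
  simp [h1]

lemma det_a (y Y : F) : (amat' y Y).det ≠ 0 := by
  apply unip_det
  · intro i j h
    fin_cases i <;> fin_cases j <;> first | rfl | (exfalso; revert h; decide)
  · intro i; fin_cases i <;> rfl

lemma det_b (y Y : F) : (bmat' y Y).det ≠ 0 := by
  apply unip_det
  · intro i j h
    fin_cases i <;> fin_cases j <;> first | rfl | (exfalso; revert h; decide)
  · intro i; fin_cases i <;> rfl

lemma det_c (y Y : F) : (cmat' y Y).det ≠ 0 := by
  apply unip_det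
  · intro i j h
    fin_cases i <;> fin_cases j <;> first | rfl | (exfalso; revert h; decide)
  · intro i; fin_cases i <;> rfl

lemma det_h (d T : F) (hd : d ≠ 0) (hT : T ≠ 0) : (hmat' d T).det ≠ 0 := by
  have h1 : hmat' (1 : F) 1 = 1 := by
    rw [hmat', ← Matrix.diagonal_one]
    congr 1
    ext i; fin_cases i <;> simp
  have : hmat' d T * hmat' d⁻¹ T⁻¹ = 1 := by
    rw [hmat'_mul, mul_inv_cancel₀ hd, mul_inv_cancel₀ hT, h1]
  exact Matrix.det_ne_zero_of_right_inverse this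

lemma det_u : (ups : Matrix (Fin 7) (Fin 7) F).det ≠ 0 := by
  have : (ups : Matrix (Fin 7) (Fin 7) F) * ups = 1 := by
    ext i j
    rw [Matrix.mul_apply]
    fin_cases i <;> fin_cases j <;> simp [ups, Fin.sum_univ_succ]
  exact Matrix.det_ne_zero_of_right_inverse this

lemma ex_mem {t : ℕ} {M : Matrix (Fin 7) (Fin 7) F} (hdet : M.det ≠ 0)
    (h : (∃ x : F, M = amat t x) ∨ (∃ x : F, M = bmat t x) ∨ (∃ x : F, M = cmat t x) ∨
      (∃ l : Fˣ, M = hmat t l) ∨ M = ups) :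
    ∃ g : ReeGroup (F := F) t, ((g : GL (Fin 7) F) : Matrix (Fin 7) (Fin 7) F) = M :=
  ⟨⟨Matrix.GeneralLinearGroup.mkOfDetNeZero M hdet, Subgroup.subset_closure h⟩, rfl⟩

lemma exists_odd_prime (m : ℕ) (hm : 0 < m) :
    ∃ l : ℕ, l.Prime ∧ 2 < l ∧ l ∣ 3 ^ (2 * m + 1) - 1 := by
  obtain ⟨k, rfl⟩ : ∃ k, m = k + 1 := ⟨m - 1, by omega⟩
  have h9 : 9 ^ (k + 1) % 4 = 1 := by
    rw [Nat.pow_mod]; simp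
  have hpos : 9 ≤ 9 ^ (k + 1) := by
    calc 9 = 9 ^ 1 := rfl
      _ ≤ 9 ^ (k + 1) := Nat.pow_le_pow_right (by norm_num) (by omega)
  have e : 3 ^ (2 * (k + 1) + 1) = 3 * 9 ^ (k + 1) := by
    rw [pow_succ, pow_mul]; norm_num [mul_comm]
  obtain ⟨l, hl, hd⟩ := Nat.exists_prime_and_dvd (n := (3 ^ (2 * (k + 1) + 1) - 1) / 2) (by omega)
  have h2 : 2 * ((3 ^ (2 * (k + 1) + 1) - 1) / 2) = 3 ^ (2 * (k + 1) + 1) - 1 := by omega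
  refine ⟨l, hl, ?_, h2 ▸ hd.mul_left 2⟩
  rcases hl.two_le.lt_or_eq with h | h
  · exact h
  · exfalso
    rw [← h] at hd
    omega

lemma ree_data (m : ℕ) [Fintype F] (hF : Fintype.card F = 3 ^ (2 * m + 1)) :
    ∃ τ : F →+* F, Data τ (ReeGroup (F := F) (3 ^ m)) := by
  have : Fact (Nat.Prime 3) := ⟨Nat.prime_three⟩
  have : CharP F 3 := charP_of_card_eq_prime_pow hF
  have hq : ∀ x : F, x ^ (3 ^ (2 * m + 1)) = x := fun x => by rw [← hF, FiniteField.pow_card]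
  let τ : F →+* F := iterateFrobenius F 3 (m + 1)
  have hτ : ∀ x, τ x = x ^ (3 ^ (m + 1)) := fun x => iterateFrobenius_def 3 (m + 1) x
  have tt : ∀ x, τ (τ x) = x ^ 3 := by
    intro x
    rw [hτ, hτ, ← pow_mul, ← pow_add, show m + 1 + (m + 1) = 2 * m + 1 + 1 by ring, pow_succ,
      pow_mul, hq]
  have t1 : ∀ x, τ (x ^ (3 ^ m)) = x := by
    intro x
    rw [hτ, ← pow_mul, ← pow_add, show m + (m + 1) = 2 * m + 1 by ring, hq]
  have t2 : ∀ x, (τ x) ^ (3 ^ m) = x := by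
    intro x
    rw [hτ, ← pow_mul, ← pow_add, show m + 1 + m = 2 * m + 1 by ring, hq]
  refine ⟨τ, tt, ?_, ?_, ?_, ?_, ?_, ?_⟩
  · rintro ⟨g, hg⟩
    change Good τ (g : Matrix (Fin 7) (Fin 7) F)
    rw [ReeGroup, ← Subgroup.mem_toSubmonoid, Subgroup.closure_toSubmonoid_of_finite] at hg
    induction hg using Submonoid.closure_induction with
    | mem g hg =>
      rcases hg with ⟨x, h⟩ | ⟨x, h⟩ | ⟨x, h⟩ | ⟨x, h⟩ | h
      · have := good_a τ (x ^ (3 ^ m)) (tt _)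
        rwa [t1, ← amat_eq, ← h] at this
      · have := good_b τ (x ^ (3 ^ m)) (tt _)
        rwa [t1, ← bmat_eq, ← h] at this
      · have := good_c τ (x ^ (3 ^ m)) (tt _)
        rwa [t1, ← cmat_eq, ← h] at this
      · have := good_h τ ((x : F) ^ (3 ^ m)) (pow_ne_zero _ x.ne_zero) (tt _)
        rwa [t1, ← hmat_eq, ← h] at this
      · rw [h]; exact good_u τ
    | one => exact Good.one
    | mul g h _ _ hg hh => exact hg.mul hh
  · intro y
    refine ex_mem (det_a _ _) (Or.inl ⟨τ y, ?_⟩)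
    rw [amat_eq, t2]
  · intro y
    refine ex_mem (det_b _ _) (Or.inr (Or.inl ⟨τ y, ?_⟩))
    rw [bmat_eq, t2]
  · intro y
    refine ex_mem (det_c _ _) (Or.inr (Or.inr (Or.inl ⟨τ y, ?_⟩)))
    rw [cmat_eq, t2]
  · intro d
    refine ex_mem (det_h _ _ d.ne_zero ((map_ne_zero τ).2 d.ne_zero))
      (Or.inr (Or.inr (Or.inr (Or.inl ⟨Units.map (τ : F →* F) d, ?_⟩))))
    rw [hmat_eq, Units.coe_map]
    change _ = hmat' (τ (d : F) ^ 3 ^ m) (τ (d : F))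
    rw [t2]
  · exact ex_mem det_u (Or.inr (Or.inr (Or.inr (Or.inr rfl))))

end Fin
end ReePaper


/-- The number of elements of order exactly `q - 1` in `Ree(q)` equals
`φ(q-1) · q^3 (q^3 + 1) / 2`. -/
theorem order_q_minus_one_count (m : ℕ) (hm : 0 < m) (F : Type*) [Field F] [Fintype F]
    (hF : Fintype.card F = 3 ^ (2 * m + 1)) :
    2 * Nat.card {g : GL (Fin 7) F // g ∈ ReeGroup (F := F) (3 ^ m) ∧
        orderOf g = 3 ^ (2 * m + 1) - 1} =
      Nat.totient (3 ^ (2 * m + 1) - 1) * ((3 ^ (2 * m + 1)) ^ 3 * ((3 ^ (2 * m + 1)) ^ 3 + 1)) := by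
  obtain ⟨τ, D⟩ := ree_data m hF
  obtain ⟨l, hl, hl2, hd⟩ := exists_odd_prime m hm
  have main := data_count D l hl hl2 (hF.symm ▸ hd)
  rw [hF] at main
  rw [← main]
  congr 1
  refine Nat.card_congr
    { toFun := fun g => ⟨⟨g.1, g.2.1⟩, ?_⟩
      invFun := fun g => ⟨g.1.1, g.1.2, ?_⟩
      left_inv := fun g => rfl
      right_inv := fun g => rfl }
  · rw [Subgroup.orderOf_mk]; exact g.2.2
  · rw [Subgroup.orderOf_coe]; exact g.2
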